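/- Let h be a smooth compactly supported function on ℝ^d with h ≠ 0, and for λ ≥ 1 set h_λ(x) = h(x)·exp(−πiλ|x|²). Then for every 1 ≤ q ≤ ∞ there exist constants c₁, c₂ > 0 such that c₁ · λ^{d/q − d/2} ≤ ‖ĥ_λ‖_{L^q(ℝ^d)} ≤ c₂ · λ^{d/q − d/2} for all λ ≥ 1, where ĥ_λ denotes the Fourier transform of h_λ. -/

import Mathlib

open MeasureTheory SchwartzMap Complex ENNReal NNReal

noncomputable section

/-- Mixed `L^p`-type norm of an `ℝ≥0∞`-valued function, with the usual
`essSup` modification when `p = ∞`. -/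
def lqNorm {α : Type*} [MeasurableSpace α] (μ : Measure α) (p : ℝ≥0∞)
    (f : α → ℝ≥0∞) : ℝ≥0∞ :=
  if p = ∞ then essSup f μ else (∫⁻ a, f a ^ p.toReal ∂μ) ^ (1 / p.toReal)

/-- Conjugate exponent in `ℝ≥0∞` : `1/p + 1/p' = 1`, with `1' = ∞`, `∞' = 1`. -/
def dualExp (p : ℝ≥0∞) : ℝ≥0∞ :=
  if p = 1 then ∞ else if p = ∞ then 1 else ENNReal.ofReal (p.toReal / (p.toReal - 1))

/-- `1/p` as a real number, with the convention `1/∞ = 0`. -/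
def invR (p : ℝ≥0∞) : ℝ := (p⁻¹).toReal

/-- The Gaussian window `G(t) = exp(-π |t|²)` (as a complex-valued function). -/
def gaussWin {ι : Type*} [Fintype ι] (t : EuclideanSpace ℝ ι) : ℂ :=
  Complex.exp (-(Real.pi * ‖t‖ ^ 2))

/-- Short-time Fourier transform with Gaussian window:
`V_G F (x, ω) = ∫ F t * conj (G (t - x)) * exp (-2πi ω⬝t) dt`. -/
def STFT {ι : Type*} [Fintype ι] (F : EuclideanSpace ℝ ι → ℂ)
    (x ω : EuclideanSpace ℝ ι) : ℂ :=
  ∫ t, F t * (starRingEnd ℂ) (gaussWin (t - x)) *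
    Complex.exp (Complex.I * (-(2 * Real.pi * (inner ℝ ω t : ℝ))))

/-- Modulation space norm `M^{p,q}`. -/
def modNorm {ι : Type*} [Fintype ι] (p q : ℝ≥0∞)
    (F : EuclideanSpace ℝ ι → ℂ) : ℝ≥0∞ :=
  lqNorm volume q fun ω => lqNorm volume p fun x => (‖STFT F x ω‖₊ : ℝ≥0∞)

/-- Wiener amalgam norm `W(𝓕 L^p, L^q)` (local component Fourier–Lebesgue). -/
def wFLNorm {ι : Type*} [Fintype ι] (p q : ℝ≥0∞)
    (F : EuclideanSpace ℝ ι → ℂ) : ℝ≥0∞ :=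
  lqNorm volume q fun x => lqNorm volume p fun ω => (‖STFT F x ω‖₊ : ℝ≥0∞)

/-- The unit cube `[0,1)^d`. -/
def unitCube (d : ℕ) : Set (EuclideanSpace ℝ (Fin d)) :=
  {x | ∀ i, x i ∈ Set.Ico (0 : ℝ) 1}

/-- Wiener amalgam norm
`‖f‖_{W(L^r,L^s)} = ( Σ_{n ∈ ℤ^d} ( ∫_{[0,1)^d} |f(x+n)|^r dx )^{s/r} )^{1/s}`. -/
def wNorm (d : ℕ) (r s : ℝ≥0∞) (f : EuclideanSpace ℝ (Fin d) → ℂ) : ℝ≥0∞ :=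
  lqNorm (Measure.count : Measure (Fin d → ℤ)) s fun n =>
    lqNorm (volume.restrict (unitCube d)) r fun x =>
      (‖f (x + show EuclideanSpace ℝ (Fin d) from WithLp.toLp 2 fun i => (n i : ℝ))‖₊ : ℝ≥0∞)

/-- Pairing `(x, ω) ∈ ℝ^d × ℝ^d ↦ ℝ^{2d}`. -/
def pairE {d : ℕ} (x ω : EuclideanSpace ℝ (Fin d)) :
    EuclideanSpace ℝ (Fin d ⊕ Fin d) :=
  WithLp.toLp 2 fun i => Sum.elim (fun j => x j) (fun j => ω j) i

/-- First (space) component of a point of `ℝ^{2d}`. -/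
def xpart {d : ℕ} (z : EuclideanSpace ℝ (Fin d ⊕ Fin d)) :
    EuclideanSpace ℝ (Fin d) := WithLp.toLp 2 fun i => z (Sum.inl i)

/-- Second (frequency) component of a point of `ℝ^{2d}`. -/
def wpart {d : ℕ} (z : EuclideanSpace ℝ (Fin d ⊕ Fin d)) :
    EuclideanSpace ℝ (Fin d) := WithLp.toLp 2 fun i => z (Sum.inr i)

/-- Fourier transform `f̂(ω) = ∫ f t e^{-2πi t⬝ω} dt`. -/
def fTrans {ι : Type*} [Fintype ι] (f : EuclideanSpace ℝ ι → ℂ)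
    (ω : EuclideanSpace ℝ ι) : ℂ :=
  ∫ t, f t * Complex.exp (Complex.I * (-(2 * Real.pi * (inner ℝ t ω : ℝ))))

/-- Kohn–Nirenberg operator `a(x,D) f (x) = ∫ a(x,ω) f̂(ω) e^{2πi x⬝ω} dω`. -/
def KNop {d : ℕ} (a : EuclideanSpace ℝ (Fin d ⊕ Fin d) → ℂ)
    (f : EuclideanSpace ℝ (Fin d) → ℂ) (x : EuclideanSpace ℝ (Fin d)) : ℂ :=
  ∫ ω, a (pairE x ω) * fTrans f ω *
    Complex.exp (Complex.I * (2 * Real.pi * (inner ℝ x ω : ℝ)))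

/-- Weyl operator `L_σ f (x) = ∫∫ e^{2πi (x-y)⬝ω} σ((x+y)/2, ω) f(y) dy dω`. -/
def weylOp {d : ℕ} (σ : EuclideanSpace ℝ (Fin d ⊕ Fin d) → ℂ)
    (f : EuclideanSpace ℝ (Fin d) → ℂ) (x : EuclideanSpace ℝ (Fin d)) : ℂ :=
  ∫ y, ∫ ω, Complex.exp (Complex.I * (2 * Real.pi * (inner ℝ (x - y) ω : ℝ))) *
    σ (pairE ((2 : ℝ)⁻¹ • (x + y)) ω) * f y

/-- Cross-Wigner distribution
`W(g,f)(x,ω) = ∫ g(x+t/2) conj(f(x−t/2)) e^{−2πi ω⬝t} dt`. -/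
def wigner {d : ℕ} (g f : EuclideanSpace ℝ (Fin d) → ℂ)
    (z : EuclideanSpace ℝ (Fin d ⊕ Fin d)) : ℂ :=
  ∫ t, g (xpart z + (2 : ℝ)⁻¹ • t) * (starRingEnd ℂ) (f (xpart z - (2 : ℝ)⁻¹ • t)) *
    Complex.exp (Complex.I * (-(2 * Real.pi * (inner ℝ (wpart z) t : ℝ))))

end

/-!
Writing the Fourier transform of `h · exp (-b|·|²)` as the integral of the inverse transform of `h`
against that of a Gaussian, and letting `b` tend to the imaginary axis, gives the dispersive
estimate `‖ĥ_λ‖_∞ ≲ λ^{-d/2}`. Since differentiation acts on `h_λ` as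
`∂ₘ h_λ = (∂ₘ h)_λ - 2πiλ (⟪·, m⟫ h)_λ`, applying the estimate to derivatives and moments of `h`
bounds `ĥ_λ(w)` by `λ^{-d/2} (1 + |w|/λ)^{-k}` for every `k`, and rescaling yields the upper bound
for all `q`. The lower bound follows by duality:
`‖h‖₂² = ‖ĥ_λ‖₂² ≤ ‖ĥ_λ‖_q ‖ĥ_λ‖_{q'}` and the upper bound at `q'`.
-/

open Module
open scoped FourierTransform LineDeriv RealInnerProductSpace Real

section LpNorm

lemma eLpNorm_comp_smul {E F : Type*} [NormedAddCommGroup E] [NormedSpace ℝ E]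
    [FiniteDimensional ℝ E] [MeasurableSpace E] [BorelSpace E] (μ : Measure E)
    [μ.IsAddHaarMeasure] [NormedAddCommGroup F] {g : E → F} (hg : AEStronglyMeasurable g μ)
    (p : ℝ≥0∞) {r : ℝ} (hr : r ≠ 0) :
    eLpNorm (fun x ↦ g (r • x)) p μ =
      ENNReal.ofReal (|r⁻¹| ^ (finrank ℝ E * invR p)) * eLpNorm g p μ := by
  have hmap : Measure.map (r • ·) μ = ENNReal.ofReal (|r⁻¹| ^ finrank ℝ E) • μ := by
    rw [Measure.map_addHaar_smul μ hr, ← inv_pow, abs_pow]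
  have hpos : 0 < |r⁻¹| ^ finrank ℝ E := by positivity
  have hg_map : AEStronglyMeasurable g (Measure.map (r • ·) μ) :=
    hmap ▸ hg.smul_measure _
  calc eLpNorm (g ∘ (r • ·)) p μ
      = eLpNorm g p (ENNReal.ofReal (|r⁻¹| ^ finrank ℝ E) • μ) := by
        rw [← hmap, eLpNorm_map_measure hg_map (by fun_prop)]
    _ = ENNReal.ofReal (|r⁻¹| ^ (finrank ℝ E * invR p)) * eLpNorm g p μ := by
        rw [eLpNorm_smul_measure_of_ne_zero (ENNReal.ofReal_pos.2 hpos).ne', smul_eq_mul,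
          one_div, ENNReal.ofReal_rpow_of_pos hpos, Real.rpow_mul (abs_nonneg _),
          Real.rpow_natCast, invR]

lemma eLpNorm_two_sq_le_mul_eLpNorm {α F : Type*} [MeasurableSpace α] {μ : Measure α}
    [NormedAddCommGroup F] {f : α → F} (hf : AEStronglyMeasurable f μ)
    (p q : ℝ≥0∞) [HolderConjugate p q] :
    eLpNorm f 2 μ ^ 2 ≤ eLpNorm f p μ * eLpNorm f q μ := by
  have hsq : eLpNorm f 2 μ ^ 2 = eLpNorm ((‖f ·‖) • (‖f ·‖)) 1 μ := by
    have h := eLpNorm_nnreal_pow_eq_lintegral (μ := μ) (f := f) (p := 2) two_ne_zero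
    norm_cast at h
    simpa [eLpNorm_one_eq_lintegral_enorm, enorm_mul, sq] using h
  simpa only [hsq, eLpNorm_norm] using
    eLpNorm_smul_le_mul_eLpNorm (p := p) (q := q) (r := 1) hf.norm hf.norm

lemma invR_add_invR_of_holderConjugate (p q : ℝ≥0∞) [HolderConjugate p q] :
    invR p + invR q = 1 := by
  have hp : p⁻¹ ≠ ⊤ := ENNReal.inv_ne_top.2 (HolderConjugate.ne_zero p q)
  have hq : q⁻¹ ≠ ⊤ := ENNReal.inv_ne_top.2 (HolderConjugate.ne_zero q p)
  rw [invR, invR, ← ENNReal.toReal_add hp hq, HolderConjugate.inv_add_inv_eq_one p q,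
    ENNReal.toReal_one]

lemma toReal_eLpNorm_schwartzMap_pos {E F : Type*} [NormedAddCommGroup E] [NormedSpace ℝ E]
    [NormedAddCommGroup F] [NormedSpace ℝ F] [MeasurableSpace E] [OpensMeasurableSpace E]
    [SecondCountableTopologyEither E F] {μ : Measure E}
    [μ.HasTemperateGrowth] [μ.IsOpenPosMeasure]
    {h : 𝓢(E, F)} (hh : h ≠ 0) (p : ℝ≥0∞) [Fact (1 ≤ p)] :
    0 < (eLpNorm h p μ).toReal := by
  rw [← SchwartzMap.norm_toLp, norm_pos_iff]
  exact fun h₀ ↦ hh (SchwartzMap.injective_toLp p μ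
    (h₀.trans (map_zero (toLpCLM ℝ F p μ)).symm))

end LpNorm

section Dispersion

variable {V F : Type*} [NormedAddCommGroup V] [InnerProductSpace ℝ V] [FiniteDimensional ℝ V]
  [MeasurableSpace V] [BorelSpace V] [NormedAddCommGroup F] [NormedSpace ℂ F]

lemma norm_fourier_modulated_gaussian_le {b : ℂ} (hb : 0 < b.re) (x w : V) :
    ‖𝓕 (fun v : V ↦ cexp (-b * ‖v‖ ^ 2 + 2 * π * I * ⟪x, v⟫)) w‖ ≤
      (π / ‖b‖) ^ (finrank ℝ V / 2 : ℝ) := by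
  have hexp : ‖cexp (-π ^ 2 * ‖x - w‖ ^ 2 / b)‖ ≤ 1 := by
    have hre : (-π ^ 2 * ‖x - w‖ ^ 2 / b : ℂ).re = -(π ^ 2 * ‖x - w‖ ^ 2 * (b.re / normSq b)) := by
      rw [← Complex.inv_re, ← neg_mul, ← Complex.re_ofReal_mul]
      push_cast
      ring_nf
    have : 0 ≤ b.re / normSq b := div_nonneg hb.le (normSq_nonneg b)
    rw [Complex.norm_exp, Real.exp_le_one_iff, hre, neg_nonpos]
    positivity
  have hcpow : ‖(π / b : ℂ) ^ (finrank ℝ V / 2 : ℂ)‖ = (π / ‖b‖) ^ (finrank ℝ V / 2 : ℝ) := by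
    rw [show (finrank ℝ V / 2 : ℂ) = ((finrank ℝ V / 2 : ℝ) : ℂ) by push_cast; rfl,
      Complex.norm_cpow_real, norm_div, Complex.norm_real, Real.norm_of_nonneg Real.pi_nonneg]
  rw [fourier_gaussian_innerProductSpace' hb, norm_mul, hcpow]
  exact mul_le_of_le_one_right (by positivity) hexp

lemma fourier_gaussian_smul_eq (b : ℂ) (h : V → F) (w : V) :
    𝓕 (fun v ↦ cexp (-b * ‖v‖ ^ 2) • h v) w =
      ∫ v, cexp (-b * ‖v‖ ^ 2 + 2 * π * I * ⟪-w, v⟫) • h v := by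
  rw [Real.fourier_eq']
  congr with v
  rw [smul_smul, ← Complex.exp_add, inner_neg_left, real_inner_comm]
  congr 2
  push_cast
  ring

lemma continuousOn_fourier_gaussian_smul {h : V → F} (hh : Integrable h) (w : V) :
    ContinuousOn (fun b : ℂ ↦ 𝓕 (fun v ↦ cexp (-b * ‖v‖ ^ 2) • h v) w) {b | 0 ≤ b.re} := by
  simp only [fourier_gaussian_smul_eq]
  refine continuousOn_of_dominated (bound := fun v ↦ ‖h v‖) (fun b _ ↦ ?_) (fun b hb ↦ ?_)
    hh.norm (ae_of_all _ fun v ↦ by fun_prop)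
  · exact (Continuous.aestronglyMeasurable (by fun_prop)).smul hh.aestronglyMeasurable
  · refine ae_of_all _ fun v ↦ ?_
    have hre : (-b * ‖v‖ ^ 2 + 2 * π * I * ⟪-w, v⟫ : ℂ).re = -(b.re * ‖v‖ ^ 2) := by
      rw [← Complex.ofReal_pow]
      simp [-Complex.ofReal_pow]
    rw [norm_smul, Complex.norm_exp, hre]
    refine mul_le_of_le_one_left (norm_nonneg _) (Real.exp_le_one_iff.2 (neg_nonpos.2 ?_))
    exact mul_nonneg hb (sq_nonneg _)

variable [CompleteSpace F]

lemma norm_fourier_gaussian_smul_le_of_re_pos (h : 𝓢(V, F)) {b : ℂ} (hb : 0 < b.re) (w : V) :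
    ‖𝓕 (fun v ↦ cexp (-b * ‖v‖ ^ 2) • h v) w‖ ≤
      (π / ‖b‖) ^ (finrank ℝ V / 2 : ℝ) * ∫ x, ‖𝓕⁻ h x‖ := by
  let g : V → ℂ := fun v ↦ cexp (-b * ‖v‖ ^ 2 + 2 * π * I * ⟪-w, v⟫)
  have hg : Integrable g := GaussianFourier.integrable_cexp_neg_mul_sq_norm_add hb _ _
  have hself_adjoint : ∫ v, 𝓕 g v • 𝓕⁻ h v = ∫ v, g v • h v := by
    have hflip := VectorFourier.integral_fourierIntegral_smul_eq_flip (L := innerₗ V)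
      (μ := volume) (ν := volume) Real.continuous_fourierChar continuous_inner hg (𝓕⁻ h).integrable
    rw [flip_innerₗ] at hflip
    calc ∫ v, 𝓕 g v • 𝓕⁻ h v = ∫ v, g v • 𝓕 (𝓕⁻ h) v := hflip
      _ = ∫ v, g v • h v := by rw [FourierTransform.fourier_fourierInv_eq]
  rw [fourier_gaussian_smul_eq, ← hself_adjoint, ← integral_const_mul]
  refine norm_integral_le_of_norm_le ((𝓕⁻ h).integrable.norm.const_mul _) (ae_of_all _ fun v ↦ ?_)
  rw [norm_smul]
  gcongr
  exact norm_fourier_modulated_gaussian_le hb _ _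

lemma norm_fourier_gaussian_smul_le (h : 𝓢(V, F)) {b : ℂ} (hb : 0 ≤ b.re) (hb₀ : b ≠ 0) (w : V) :
    ‖𝓕 (fun v ↦ cexp (-b * ‖v‖ ^ 2) • h v) w‖ ≤
      (π / ‖b‖) ^ (finrank ℝ V / 2 : ℝ) * ∫ x, ‖𝓕⁻ h x‖ := by
  have hb_closure : b ∈ closure {z : ℂ | 0 < z.re} := by
    rwa [Complex.closure_setOfPred_lt_re]
  refine ContinuousWithinAt.closure_le hb_closure ?_ ?_
    fun z hz ↦ norm_fourier_gaussian_smul_le_of_re_pos h hz w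
  · exact ((continuousOn_fourier_gaussian_smul h.integrable w).norm b hb).mono
      fun z (hz : 0 < z.re) ↦ hz.le
  · have : ContinuousAt (fun z : ℂ ↦ (π / ‖z‖) ^ (finrank ℝ V / 2 : ℝ)) b :=
      (continuousAt_const.div continuous_norm.continuousAt (norm_ne_zero_iff.2 hb₀)).rpow_const
        (Or.inr (by positivity))
    exact (this.mul continuousAt_const).continuousWithinAt

end Dispersion

section Chirp

variable {V F : Type*} [NormedAddCommGroup V]

/-- The chirp `x ↦ e^{-πiλ|x|²}`, the quadratic phase that turns `h` into `h_λ`. It is written as a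
Gaussian of imaginary parameter `πλi`, the boundary case of the Gaussians with `0 < b.re`. -/
noncomputable def chirp (lam : ℝ) (x : V) : ℂ :=
  cexp (-(π * lam * I) * ‖x‖ ^ 2)

lemma norm_chirp (lam : ℝ) (x : V) : ‖chirp lam x‖ = 1 := by
  have hphase : -(π * lam * I) * ‖x‖ ^ 2 = ((-(π * lam * ‖x‖ ^ 2) : ℝ) : ℂ) * I := by
    push_cast
    ring
  rw [chirp, hphase, Complex.norm_exp_ofReal_mul_I]

variable [InnerProductSpace ℝ V] [NormedAddCommGroup F] [NormedSpace ℂ F]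

lemma hasTemperateGrowth_cexp_ofReal_mul_I :
    (fun t : ℝ ↦ cexp (t * I)).HasTemperateGrowth := by
  have hderiv (n : ℕ) : iteratedDeriv n (fun t : ℝ ↦ cexp (t * I)) =
      fun t : ℝ ↦ I ^ n * cexp (t * I) := by
    induction n with
    | zero => simp
    | succ n ih =>
      rw [iteratedDeriv_succ, ih]
      ext t
      have h := ((Complex.ofRealCLM.hasDerivAt (x := t)).mul_const I).cexp.const_mul (I ^ n)
      refine h.deriv.trans ?_
      simp only [Complex.ofRealCLM_apply, Complex.ofReal_one]
      ring
  refine ⟨(Complex.ofRealCLM.contDiff.mul contDiff_const).cexp, fun n ↦ ⟨0, 1, fun t ↦ ?_⟩⟩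
  simp [norm_iteratedFDeriv_eq_norm_iteratedDeriv, hderiv, Complex.norm_exp_ofReal_mul_I]

lemma hasTemperateGrowth_chirp (lam : ℝ) : (chirp lam : V → ℂ).HasTemperateGrowth := by
  have hphase : (fun x : V ↦ -(π * lam) * ‖x‖ ^ 2).HasTemperateGrowth := by fun_prop
  convert hasTemperateGrowth_cexp_ofReal_mul_I.comp hphase using 1
  ext x
  simp only [chirp, Function.comp_apply]
  congr 1
  push_cast
  ring

lemma hasFDerivAt_chirp (lam : ℝ) (x : V) :
    HasFDerivAt (chirp lam)
      (chirp lam x • (-(2 * π * I * lam) : ℂ) • Complex.ofRealCLM.comp (innerSL ℝ x)) x := by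
  have hnorm_sq : HasFDerivAt (fun x : V ↦ ((‖x‖ ^ 2 : ℝ) : ℂ))
      (Complex.ofRealCLM.comp (2 • innerSL ℝ x)) x :=
    Complex.ofRealCLM.hasFDerivAt.comp x (hasStrictFDerivAt_norm_sq x).hasFDerivAt
  convert (hnorm_sq.const_mul (-(π * lam * I) : ℂ)).cexp using 1
  · ext y
    simp [chirp]
  · ext m
    simp only [chirp, neg_mul, smul_apply, ContinuousLinearMap.comp_apply, coe_innerSL_apply,
      ofRealCLM_apply, smul_eq_mul, mul_neg, Complex.ofReal_pow, ContinuousLinearMap.comp_smul,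
      nsmul_eq_mul, Nat.cast_ofNat, neg_inj]
    ring

/-- Multiplication by a chirp, `h ↦ h_λ = h e^{-πiλ|·|²}`, as an operator on Schwartz space. -/
noncomputable def chirpMul (lam : ℝ) : 𝓢(V, F) →L[ℂ] 𝓢(V, F) :=
  smulLeftCLM F (chirp lam)

lemma chirpMul_apply (lam : ℝ) (h : 𝓢(V, F)) (x : V) :
    chirpMul lam h x = chirp lam x • h x :=
  smulLeftCLM_apply_apply (hasTemperateGrowth_chirp lam) h x

lemma norm_chirpMul_apply (lam : ℝ) (h : 𝓢(V, F)) (x : V) : ‖chirpMul lam h x‖ = ‖h x‖ := by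
  rw [chirpMul_apply, norm_smul, norm_chirp, one_mul]

lemma lineDerivOp_chirpMul (lam : ℝ) (h : 𝓢(V, F)) (m : V) :
    ∂_{m} (chirpMul lam h) =
      chirpMul lam (∂_{m} h - (2 * π * I * lam : ℂ) • smulLeftCLM F (inner ℝ · m) h) := by
  ext x
  have hderiv := (hasFDerivAt_chirp lam x).smul (h.hasFDerivAt x)
  have hcoe : ⇑(chirpMul lam h) = (chirp lam : V → ℂ) • ⇑h := by
    ext x
    exact chirpMul_apply lam h x
  have hinner : smulLeftCLM F (inner ℝ · m) h x = (⟪x, m⟫ : ℂ) • h x := by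
    rw [smulLeftCLM_apply_apply (by fun_prop), Complex.coe_smul]
  rw [SchwartzMap.lineDerivOp_apply_eq_fderiv, hcoe, hderiv.fderiv, chirpMul_apply]
  simp [SchwartzMap.lineDerivOp_apply_eq_fderiv, hinner, smul_smul, sub_eq_add_neg, mul_assoc,
    -Complex.coe_smul]

end Chirp

lemma norm_le_sum_abs_inner {V ι : Type*} [NormedAddCommGroup V] [InnerProductSpace ℝ V]
    [Fintype ι] (e : OrthonormalBasis ι ℝ V) (w : V) : ‖w‖ ≤ ∑ i, |⟪w, e i⟫| := by
  calc ‖w‖ = ‖∑ i, ⟪e i, w⟫ • e i‖ := by rw [e.sum_repr' w]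
    _ ≤ ∑ i, ‖⟪e i, w⟫ • e i‖ := norm_sum_le _ _
    _ = ∑ i, |⟪w, e i⟫| := by
      simp [norm_smul, real_inner_comm]

section ChirpFourier

variable {V F : Type*} [NormedAddCommGroup V] [InnerProductSpace ℝ V] [FiniteDimensional ℝ V]
  [MeasurableSpace V] [BorelSpace V] [NormedAddCommGroup F] [NormedSpace ℂ F]

lemma two_pi_I_smul_inner_smul_fourier_chirpMul (lam : ℝ) (h : 𝓢(V, F)) (m w : V) :
    (2 * π * I : ℂ) • (⟪w, m⟫ : ℝ) • 𝓕 (chirpMul lam h) w =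
      𝓕 (chirpMul lam (∂_{m} h)) w -
        (2 * π * I * lam : ℂ) • 𝓕 (chirpMul lam (smulLeftCLM F (inner ℝ · m) h)) w := by
  have hfourier : 𝓕 (∂_{m} (chirpMul lam h)) = 𝓕 (chirpMul lam (∂_{m} h)) -
      (2 * π * I * lam : ℂ) • 𝓕 (chirpMul lam (smulLeftCLM F (inner ℝ · m) h)) := by
    rw [lineDerivOp_chirpMul, ← FourierTransform.fourierCLM_apply (R := ℂ)]
    simp only [map_sub, map_smul, FourierTransform.fourierCLM_apply]
  have := congr($hfourier w)
  rwa [SchwartzMap.fourier_lineDerivOp_eq, smul_apply, smulLeftCLM_apply_apply (by fun_prop)]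
    at this

lemma abs_inner_div_mul_norm_fourier_chirpMul_le {lam : ℝ} (hlam : 1 ≤ lam) (h : 𝓢(V, F))
    (m w : V) :
    |⟪w, m⟫| / lam * ‖𝓕 (chirpMul lam h) w‖ ≤
      ‖𝓕 (chirpMul lam (∂_{m} h)) w‖ +
        ‖𝓕 (chirpMul lam (smulLeftCLM F (inner ℝ · m) h)) w‖ := by
  have hlam₀ : 0 < lam := by positivity
  set a := ‖𝓕 (chirpMul lam h) w‖
  set D := ‖𝓕 (chirpMul lam (∂_{m} h)) w‖
  set X := ‖𝓕 (chirpMul lam (smulLeftCLM F (inner ℝ · m) h)) w‖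
  have hnorm : 2 * π * (|⟪w, m⟫| * a) ≤ D + 2 * π * lam * X := by
    have := congr(‖$(two_pi_I_smul_inner_smul_fourier_chirpMul lam h m w)‖).trans_le
      (norm_sub_le _ _)
    simpa [norm_smul, abs_of_pos Real.pi_pos, abs_of_pos hlam₀] using this
  have hD : D ≤ 2 * π * lam * D :=
    le_mul_of_one_le_left (norm_nonneg _) (by nlinarith [Real.pi_gt_three])
  rw [div_mul_eq_mul_div, div_le_iff₀ hlam₀]
  refine le_of_mul_le_mul_left ?_ Real.two_pi_pos
  linarith

variable [CompleteSpace F]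

lemma norm_fourier_chirpMul_le {lam : ℝ} (hlam : 0 < lam) (h : 𝓢(V, F)) (w : V) :
    ‖𝓕 (chirpMul lam h) w‖ ≤ lam ^ (-(finrank ℝ V / 2) : ℝ) * ∫ x, ‖𝓕⁻ h x‖ := by
  have hcoe : 𝓕 (chirpMul lam h) w = 𝓕 (fun v ↦ cexp (-(π * lam * I) * ‖v‖ ^ 2) • h v) w := by
    rw [SchwartzMap.fourier_coe, show ⇑(chirpMul lam h) = _ from funext (chirpMul_apply lam h)]
    rfl
  have hnorm : π / ‖(π * lam * I : ℂ)‖ = lam⁻¹ := by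
    simp only [Complex.norm_mul, norm_real, Real.norm_eq_abs, abs_of_pos Real.pi_pos,
      abs_of_pos hlam, norm_I, mul_one]
    field_simp
  have hdisp := norm_fourier_gaussian_smul_le h (b := π * lam * I) (by simp)
    (by simp [Real.pi_ne_zero, hlam.ne']) w
  rwa [hnorm, Real.inv_rpow hlam.le, ← Real.rpow_neg hlam.le, ← hcoe] at hdisp

lemma exists_pow_mul_norm_fourier_chirpMul_le (n : ℕ) (h : 𝓢(V, F)) :
    ∃ C, ∀ lam : ℝ, 1 ≤ lam → ∀ w,
      (‖w‖ / lam) ^ n * ‖𝓕 (chirpMul lam h) w‖ ≤ C * lam ^ (-(finrank ℝ V / 2) : ℝ) := by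
  induction n generalizing h with
  | zero =>
    refine ⟨∫ x, ‖𝓕⁻ h x‖, fun lam hlam w ↦ ?_⟩
    rw [pow_zero, one_mul, mul_comm]
    exact norm_fourier_chirpMul_le (by positivity) h w
  | succ n ih =>
    let e := stdOrthonormalBasis ℝ V
    choose C hC using ih
    refine ⟨∑ i, (C (∂_{e i} h) + C (smulLeftCLM F (inner ℝ · (e i)) h)), fun lam hlam w ↦ ?_⟩
    calc (‖w‖ / lam) ^ (n + 1) * ‖𝓕 (chirpMul lam h) w‖
        ≤ (‖w‖ / lam) ^ n * ((∑ i, |⟪w, e i⟫|) / lam) * ‖𝓕 (chirpMul lam h) w‖ := by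
          rw [pow_succ]
          gcongr
          exact norm_le_sum_abs_inner e w
      _ = ∑ i, (‖w‖ / lam) ^ n * (|⟪w, e i⟫| / lam * ‖𝓕 (chirpMul lam h) w‖) := by
          rw [Finset.sum_div, Finset.mul_sum, Finset.sum_mul]
          simp only [mul_assoc]
      _ ≤ ∑ i, (‖w‖ / lam) ^ n * (‖𝓕 (chirpMul lam (∂_{e i} h)) w‖ +
            ‖𝓕 (chirpMul lam (smulLeftCLM F (inner ℝ · (e i)) h)) w‖) := by
          gcongr with i
          exact abs_inner_div_mul_norm_fourier_chirpMul_le hlam h (e i) w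
      _ ≤ ∑ i, (C (∂_{e i} h) + C (smulLeftCLM F (inner ℝ · (e i)) h)) *
            lam ^ (-(finrank ℝ V / 2) : ℝ) := by
          refine Finset.sum_le_sum fun i _ ↦ ?_
          rw [mul_add, add_mul]
          exact add_le_add (hC _ lam hlam w) (hC _ lam hlam w)
      _ = _ := by rw [Finset.sum_mul]

lemma exists_norm_fourier_chirpMul_le_one_add_norm (k : ℕ) (h : 𝓢(V, F)) :
    ∃ K, 0 < K ∧ ∀ lam : ℝ, 1 ≤ lam → ∀ w, ‖𝓕 (chirpMul lam h) w‖ ≤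
      K * lam ^ (-(finrank ℝ V / 2) : ℝ) * (1 + ‖lam⁻¹ • w‖) ^ (-k : ℝ) := by
  obtain ⟨C₀, hC₀⟩ := exists_pow_mul_norm_fourier_chirpMul_le 0 h
  obtain ⟨C₁, hC₁⟩ := exists_pow_mul_norm_fourier_chirpMul_le k h
  refine ⟨2 ^ k * (|C₀| + |C₁| + 1), by positivity, fun lam hlam w ↦ ?_⟩
  have hsmul : ‖lam⁻¹ • w‖ = ‖w‖ / lam := by
    rw [norm_smul, Real.norm_of_nonneg (by positivity), inv_mul_eq_div]
  have hdecay := pow_mul_le_of_le_of_pow_mul_le (x := ‖w‖ / lam) (k := 0) (l := k)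
    (by positivity) (norm_nonneg _) (by simpa using hC₀ lam hlam w) (by simpa using hC₁ lam hlam w)
  rw [pow_zero, one_mul, ← add_mul, ← mul_assoc, ← hsmul] at hdecay
  refine hdecay.trans ?_
  gcongr ?_ * ?_ * ?_
  gcongr ?_ * ?_
  linarith [le_abs_self C₀, le_abs_self C₁]

theorem exists_eLpNorm_fourier_chirpMul_le (h : 𝓢(V, F)) (q : ℝ≥0∞) :
    ∃ c : ℝ, 0 < c ∧ ∀ lam : ℝ, 1 ≤ lam → eLpNorm (𝓕 (chirpMul lam h) : 𝓢(V, F)) q volume ≤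
      ENNReal.ofReal (c * lam ^ (finrank ℝ V * invR q - finrank ℝ V / 2)) := by
  obtain ⟨k, hk⟩ := Measure.HasTemperateGrowth.exists_eLpNorm_lt_top q
    (inferInstance : (volume : Measure V).HasTemperateGrowth)
  obtain ⟨K, hK, hbound⟩ := exists_norm_fourier_chirpMul_le_one_add_norm k h
  let φ : V → ℝ := fun x ↦ (1 + ‖x‖) ^ (-k : ℝ)
  have hφ_meas : AEStronglyMeasurable φ volume := by fun_prop
  set M := (eLpNorm φ q volume).toReal
  refine ⟨K * (M + 1), by positivity, fun lam hlam ↦ ?_⟩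
  have hlam₀ : 0 < lam := by positivity
  calc eLpNorm (𝓕 (chirpMul lam h) : 𝓢(V, F)) q volume
      ≤ ENNReal.ofReal (K * lam ^ (-(finrank ℝ V / 2) : ℝ)) *
          eLpNorm (fun w ↦ φ (lam⁻¹ • w)) q volume := by
        refine eLpNorm_le_mul_eLpNorm_of_ae_le_mul (ae_of_all _ fun w ↦ ?_) q
        exact (hbound lam hlam w).trans (by gcongr; exact Real.le_norm_self _)
    _ = ENNReal.ofReal (K * lam ^ (-(finrank ℝ V / 2) : ℝ) *
          (lam ^ (finrank ℝ V * invR q) * M)) := by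
        rw [eLpNorm_comp_smul volume hφ_meas q (inv_ne_zero hlam₀.ne'), inv_inv,
          abs_of_pos hlam₀, ← ENNReal.ofReal_toReal hk.ne, ← ENNReal.ofReal_mul (by positivity),
          ← ENNReal.ofReal_mul (by positivity)]
    _ ≤ ENNReal.ofReal (K * (M + 1) * lam ^ (finrank ℝ V * invR q - finrank ℝ V / 2)) := by
        refine ENNReal.ofReal_le_ofReal ?_
        rw [sub_eq_neg_add, Real.rpow_add hlam₀]
        have : 0 < K * (lam ^ (-(finrank ℝ V / 2) : ℝ) * lam ^ (finrank ℝ V * invR q)) := by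
          positivity
        linarith

end ChirpFourier

section LowerBound

variable {V H : Type*} [NormedAddCommGroup V] [InnerProductSpace ℝ V] [FiniteDimensional ℝ V]
  [MeasurableSpace V] [BorelSpace V] [NormedAddCommGroup H] [InnerProductSpace ℂ H]
  [CompleteSpace H]

lemma eLpNorm_two_fourier_eq (f : 𝓢(V, H)) :
    eLpNorm (𝓕 f : 𝓢(V, H)) 2 volume = eLpNorm f 2 volume := by
  have hplancherel := SchwartzMap.norm_fourier_toL2_eq f
  rwa [SchwartzMap.norm_toLp, SchwartzMap.norm_toLp, ENNReal.toReal_eq_toReal_iff'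
    ((𝓕 f).memLp 2 volume).eLpNorm_ne_top (f.memLp 2 volume).eLpNorm_ne_top] at hplancherel

lemma eLpNorm_two_fourier_chirpMul (lam : ℝ) (h : 𝓢(V, H)) :
    eLpNorm (𝓕 (chirpMul lam h) : 𝓢(V, H)) 2 volume = eLpNorm h 2 volume := by
  rw [eLpNorm_two_fourier_eq]
  exact eLpNorm_congr_norm_ae (ae_of_all _ (norm_chirpMul_apply lam h))

lemma eLpNorm_two_sq_le_mul_eLpNorm_fourier_chirpMul (lam : ℝ) (h : 𝓢(V, H)) (p q : ℝ≥0∞)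
    [HolderConjugate p q] :
    eLpNorm h 2 volume ^ 2 ≤ eLpNorm (𝓕 (chirpMul lam h) : 𝓢(V, H)) p volume *
      eLpNorm (𝓕 (chirpMul lam h) : 𝓢(V, H)) q volume := by
  rw [← eLpNorm_two_fourier_chirpMul lam h]
  exact eLpNorm_two_sq_le_mul_eLpNorm (SchwartzMap.continuous _).aestronglyMeasurable p q

theorem exists_le_eLpNorm_fourier_chirpMul {h : 𝓢(V, H)} (hh : h ≠ 0) {q : ℝ≥0∞} (hq : 1 ≤ q) :
    ∃ c : ℝ, 0 < c ∧ ∀ lam : ℝ, 1 ≤ lam →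
      ENNReal.ofReal (c * lam ^ (finrank ℝ V * invR q - finrank ℝ V / 2)) ≤
        eLpNorm (𝓕 (chirpMul lam h) : 𝓢(V, H)) q volume := by
  let q' := ENNReal.conjExponent q
  have : HolderConjugate q q' := HolderConjugate.conjExponent hq
  obtain ⟨c', hc', hupper⟩ := exists_eLpNorm_fourier_chirpMul_le h q'
  have hN : 0 < (eLpNorm h 2 volume).toReal := toReal_eLpNorm_schwartzMap_pos hh 2
  set N := (eLpNorm h 2 volume).toReal
  refine ⟨N ^ 2 / c', by positivity, fun lam hlam ↦ ?_⟩
  have hlam₀ : 0 < lam := by positivity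
  set α : ℝ := finrank ℝ V * invR q - finrank ℝ V / 2
  have hα : finrank ℝ V * invR q' - finrank ℝ V / 2 = -α := by
    linear_combination (finrank ℝ V : ℝ) * invR_add_invR_of_holderConjugate q q'
  have hdual : ENNReal.ofReal (N ^ 2) ≤
      eLpNorm (𝓕 (chirpMul lam h) : 𝓢(V, H)) q volume * ENNReal.ofReal (c' * lam ^ (-α)) := by
    rw [ENNReal.ofReal_pow hN.le, ENNReal.ofReal_toReal (h.memLp 2 volume).eLpNorm_ne_top, ← hα]
    grw [eLpNorm_two_sq_le_mul_eLpNorm_fourier_chirpMul lam h q q', hupper lam hlam]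
  have hquot : N ^ 2 / c' * lam ^ α = N ^ 2 / (c' * lam ^ (-α)) := by
    rw [Real.rpow_neg hlam₀.le]
    field_simp
  rw [hquot, ENNReal.ofReal_div_of_pos (by positivity)]
  exact ENNReal.div_le_of_le_mul hdual

theorem chirp_fourier_Lq_asymp_general {h : 𝓢(V, H)} (hh : h ≠ 0) {q : ℝ≥0∞} (hq : 1 ≤ q) :
    ∃ c₁ c₂ : ℝ, 0 < c₁ ∧ 0 < c₂ ∧ ∀ lam : ℝ, 1 ≤ lam →
      ENNReal.ofReal (c₁ * lam ^ (finrank ℝ V * invR q - finrank ℝ V / 2)) ≤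
        eLpNorm (𝓕 (chirpMul lam h) : 𝓢(V, H)) q volume ∧
      eLpNorm (𝓕 (chirpMul lam h) : 𝓢(V, H)) q volume ≤
        ENNReal.ofReal (c₂ * lam ^ (finrank ℝ V * invR q - finrank ℝ V / 2)) := by
  obtain ⟨c₁, hc₁, hlower⟩ := exists_le_eLpNorm_fourier_chirpMul hh hq
  obtain ⟨c₂, hc₂, hupper⟩ := exists_eLpNorm_fourier_chirpMul_le h q
  exact ⟨c₁, c₂, hc₁, hc₂, fun lam hlam ↦ ⟨hlower lam hlam, hupper lam hlam⟩⟩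

end LowerBound

lemma fTrans_eq_fourier {ι : Type*} [Fintype ι] (f : EuclideanSpace ℝ ι → ℂ) :
    fTrans f = 𝓕 f := by
  ext w
  rw [fTrans, Real.fourier_eq']
  congr with t
  rw [smul_eq_mul, mul_comm]
  congr 2
  push_cast
  ring

lemma fTrans_mul_chirp_eq_fourier_chirpMul {ι : Type*} [Fintype ι] (lam : ℝ)
    (h : 𝓢(EuclideanSpace ℝ ι, ℂ)) :
    fTrans (fun x ↦ h x * cexp (I * (-(π * lam * ‖x‖ ^ 2)))) = 𝓕 (chirpMul lam h) := by
  rw [fTrans_eq_fourier, SchwartzMap.fourier_coe]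
  congr with x
  rw [chirpMul_apply, chirp, smul_eq_mul, mul_comm]
  congr 2
  ring

/-- `‖ĥ_λ‖_{L^q} ≍ λ^{d/q - d/2}` for `h_λ(x) = h(x) e^{-πiλ|x|²}`. -/
theorem chirp_fourier_Lq_asymp (d : ℕ) (h : EuclideanSpace ℝ (Fin d) → ℂ)
    (hsm : ContDiff ℝ (⊤ : ℕ∞) h) (hsupp : HasCompactSupport h) (hne : h ≠ 0)
    (q : ℝ≥0∞) (hq : 1 ≤ q) :
    ∃ c₁ c₂ : ℝ, 0 < c₁ ∧ 0 < c₂ ∧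
      ∀ lam : ℝ, 1 ≤ lam →
        ENNReal.ofReal (c₁ * lam ^ ((d : ℝ) * invR q - d / 2)) ≤
          eLpNorm
            (fTrans fun x => h x * Complex.exp (Complex.I * (-(Real.pi * lam * ‖x‖ ^ 2))))
            q volume ∧
        eLpNorm
            (fTrans fun x => h x * Complex.exp (Complex.I * (-(Real.pi * lam * ‖x‖ ^ 2))))
            q volume ≤
          ENNReal.ofReal (c₂ * lam ^ ((d : ℝ) * invR q - d / 2)) := by
  let f : 𝓢(EuclideanSpace ℝ (Fin d), ℂ) := hsupp.toSchwartzMap hsm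
  have hf : f ≠ 0 := fun hf₀ ↦ hne (congrArg DFunLike.coe hf₀)
  have hfTrans := fun lam ↦ fTrans_mul_chirp_eq_fourier_chirpMul lam f
  have hasymp := chirp_fourier_Lq_asymp_general hf hq
  simp only [← hfTrans, finrank_euclideanSpace_fin] at hasymp
  exact hasymp
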